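/- Let u : ℝ² → ℝ be a smooth solution of Equation (E1): u_yy = u_y·u_xx − (u_x + u)·u_xy + u_x·u_y, such that u_y is nowhere zero. Then the pair P := −1/u_y, Q := (u_x + u)/u_y is a conservation law: ∂P/∂y = ∂Q/∂x at every point of ℝ². -/

import Mathlib

/-- Partial derivative of a function on `ℝ²` in the direction `v`. -/
noncomputable def pd (v : ℝ × ℝ) (f : ℝ × ℝ → ℝ) : ℝ × ℝ → ℝ :=
  fun p => fderiv ℝ f p v

/-- Coordinates are `(x, y)`. -/
noncomputable def dx : (ℝ × ℝ → ℝ) → ℝ × ℝ → ℝ := pd (1, 0)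
noncomputable def dy : (ℝ × ℝ → ℝ) → ℝ × ℝ → ℝ := pd (0, 1)

theorem pd_differentiable (v : ℝ × ℝ) (u : ℝ × ℝ → ℝ) (hu : ContDiff ℝ (⊤ : ℕ∞) u) :
    Differentiable ℝ (pd v u) := by
  have h : ContDiff ℝ 1 (fderiv ℝ u) := hu.fderiv_right (WithTop.coe_le_coe.2 (le_top : (1 + 1 : ℕ∞) ≤ ⊤))
  exact (h.differentiable (by norm_num)).clm_apply (differentiable_const v)

theorem pd_pd (v w : ℝ × ℝ) (u : ℝ × ℝ → ℝ) (hu : ContDiff ℝ (⊤ : ℕ∞) u) (p : ℝ × ℝ) :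
    pd v (pd w u) p = fderiv ℝ (fderiv ℝ u) p v w := by
  have h : ContDiff ℝ 1 (fderiv ℝ u) := hu.fderiv_right (WithTop.coe_le_coe.2 (le_top : (1 + 1 : ℕ∞) ≤ ⊤))
  have hd : DifferentiableAt ℝ (fderiv ℝ u) p := h.differentiable (by norm_num) p
  have := hd.hasFDerivAt.clm_apply (hasFDerivAt_const w p)
  unfold pd
  rw [this.fderiv]
  simp

theorem pd_comm (v w : ℝ × ℝ) (u : ℝ × ℝ → ℝ) (hu : ContDiff ℝ (⊤ : ℕ∞) u) (p : ℝ × ℝ) :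
    pd v (pd w u) p = pd w (pd v u) p := by
  rw [pd_pd v w u hu, pd_pd w v u hu]
  have h : IsSymmSndFDerivAt ℝ u p :=
    hu.contDiffAt.isSymmSndFDerivAt (by simpa using WithTop.coe_le_coe.2 (le_top : (2 : ℕ∞) ≤ ⊤))
  exact h v w

theorem pd_div (v : ℝ × ℝ) (f g : ℝ × ℝ → ℝ) (hf : Differentiable ℝ f)
    (hg : Differentiable ℝ g) (p : ℝ × ℝ) (h0 : g p ≠ 0) :
    pd v (fun q => f q / g q) p = (pd v f p * g p - f p * pd v g p) / g p ^ 2 := by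
  have hi : HasFDerivAt (fun q => (g q)⁻¹) ((-(g p ^ 2)⁻¹) • fderiv ℝ g p) p :=
    (hasDerivAt_inv h0).comp_hasFDerivAt p (hg p).hasFDerivAt
  have := (hf p).hasFDerivAt.mul hi
  have h2 : fderiv ℝ (fun q => f q / g q) p =
      f p • (-(g p ^ 2)⁻¹) • fderiv ℝ g p + (g p)⁻¹ • fderiv ℝ f p := by
    simp only [div_eq_mul_inv]
    exact this.fderiv
  unfold pd
  rw [h2]
  simp
  field_simp
  ring

/-- For a smooth solution `u` of Equation (E1)
`u_yy = u_y·u_xx − (u_x + u)·u_xy + u_x·u_y` with `u_y` nowhere zero, the pair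
`P = −1/u_y`, `Q = (u_x + u)/u_y` is a conservation law: `∂P/∂y = ∂Q/∂x`. -/
theorem E1_conservation_law (u : ℝ × ℝ → ℝ)
    (hu : ContDiff ℝ (⊤ : ℕ∞) u)
    (hy : ∀ p : ℝ × ℝ, dy u p ≠ 0)
    (hsol : ∀ p : ℝ × ℝ,
      dy (dy u) p =
        dy u p * dx (dx u) p - (dx u p + u p) * dy (dx u) p + dx u p * dy u p) :
    ∀ p : ℝ × ℝ,
      dy (fun q => -1 / dy u q) p = dx (fun q => (dx u q + u q) / dy u q) p := by
  intro p
  have hx : Differentiable ℝ (dx u) := pd_differentiable _ u hu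
  have hyd : Differentiable ℝ (dy u) := pd_differentiable _ u hu
  have hud : Differentiable ℝ u := hu.differentiable (by simp)
  have e1 : dy (fun q => -1 / dy u q) p = _ :=
    pd_div (0, 1) (fun _ => (-1 : ℝ)) (dy u) (differentiable_const _) hyd p (hy p)
  have e2 : dx (fun q => (dx u q + u q) / dy u q) p = _ :=
    pd_div (1, 0) (fun q => dx u q + u q) (dy u) (hx.add hud) hyd p (hy p)
  have c0 : pd (0, 1) (fun _ : ℝ × ℝ => (-1 : ℝ)) p = 0 := by simp [pd]
  have a : pd (1, 0) (fun q => dx u q + u q) p = dx (dx u) p + dx u p := by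
    have h2 : fderiv ℝ (fun q => dx u q + u q) p = _ :=
      ((hx p).hasFDerivAt.add (hud p).hasFDerivAt).fderiv
    unfold pd
    rw [h2]
    rfl
  have s : pd (1, 0) (dy u) p = dy (dx u) p := pd_comm _ _ u hu p
  have t : pd (0, 1) (dy u) p = dy (dy u) p := rfl
  rw [e1, e2, c0, a, s, t, hsol p]
  congr 1
  ring
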